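/- For every K ∈ T^d, the part of the spectrum of H(K) lying outside Σ_K consists only of isolated eigenvalues of finite multiplicity, i.e. σ(H(K)) \ Σ_K ⊆ σ_disc(H(K)); in particular σ_ess(H(K)) ⊆ Σ_K. -/

import Mathlib

open MeasureTheory Complex Filter Topology Set

noncomputable section

instance fact2pi : Fact (0 < 2 * Real.pi) := ⟨by positivity⟩

/-- The d-dimensional torus `(-π, π]^d` with its Haar (Lebesgue) measure. -/
abbrev Td (d : ℕ) : Type := Fin d → AddCircle (2 * Real.pi)

/-- The Hilbert space `L²(T^d)`. -/
abbrev L2 (d : ℕ) := Lp ℂ 2 (volume : Measure (Td d))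

/-- The Hilbert space `L²((T^d)²)`. -/
abbrev L2two (d : ℕ) := Lp ℂ 2 (volume : Measure (Td d × Td d))

/-- The swap map on `L²((T^d)²)`, `(S f)(p,q) = f(q,p)`. -/
def swapL (d : ℕ) : L2two d →ₗ[ℂ] L2two d :=
  Lp.compMeasurePreservingₗ ℂ Prod.swap MeasureTheory.Measure.measurePreserving_swap

/-- The subspace `L²_sym((T^d)²)` of symmetric functions, as the fixed-point space of swap. -/
def symSub (d : ℕ) : Submodule ℂ (L2two d) := LinearMap.ker (swapL d - LinearMap.id)

abbrev L2sym (d : ℕ) := ↥(symSub d)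

instance (d : ℕ) : CompleteSpace (L2sym d) := by
  have hiso : Isometry (swapL d) :=
    Lp.isometry_compMeasurePreserving MeasureTheory.Measure.measurePreserving_swap
  have hcl : IsClosed ((symSub d : Set (L2two d))) := by
    have h1 : (symSub d : Set (L2two d)) = {f | swapL d f = f} := by
      ext f
      simp [symSub, LinearMap.mem_ker, sub_eq_zero, LinearMap.sub_apply]
    rw [h1]
    exact isClosed_eq hiso.continuous continuous_id
  exact hcl.completeSpace_coe

/-- The Hilbert space `H = ℂ ⊕ L²(T^d) ⊕ L²_sym((T^d)²)`. -/
abbrev H3 (d : ℕ) := WithLp 2 (ℂ × WithLp 2 (L2 d × L2sym d))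

/-- The zero-particle component. -/
def p0 {d : ℕ} (f : H3 d) : ℂ := (WithLp.equiv 2 _ f).1

/-- The one-particle component. -/
def p1 {d : ℕ} (f : H3 d) : L2 d := (WithLp.equiv 2 _ ((WithLp.equiv 2 _ f).2)).1

/-- The two-particle component, as an element of `L²((T^d)²)`. -/
def p2 {d : ℕ} (f : H3 d) : L2two d :=
  ((WithLp.equiv 2 _ ((WithLp.equiv 2 _ f).2)).2 : L2sym d)

/-- The essential spectrum of a bounded operator on a Hilbert space, via the Weyl criterion:
`λ ∈ σ_ess(A)` iff there is an orthonormal (singular) sequence `u` with `‖(A - λ)uₙ‖ → 0`. -/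
def essSpec {H' : Type*} [NormedAddCommGroup H'] [InnerProductSpace ℂ H']
    (A : H' →L[ℂ] H') : Set ℂ :=
  {l | ∃ u : ℕ → H', Orthonormal ℂ u ∧
        Tendsto (fun n => ‖A (u n) - l • u n‖) atTop (𝓝 0)}

/-- The discrete spectrum of a bounded operator: the set of isolated eigenvalues of finite
multiplicity. -/
def discSpec {H' : Type*} [NormedAddCommGroup H'] [InnerProductSpace ℂ H']
    (A : H' →L[ℂ] H') : Set ℂ :=
  {z | (∃ f, f ≠ 0 ∧ A f = z • f) ∧ z ∉ closure (spectrum ℂ A \ {z}) ∧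
       FiniteDimensional ℂ (LinearMap.ker ((A - z • (1 : H' →L[ℂ] H') : H' →L[ℂ] H') : H' →ₗ[ℂ] H'))}

variable {d : ℕ}

/-- `E_min(K,k) = min_q w₂(K; k, q)`. -/
def Emin (w₂ : Td d → Td d → Td d → ℝ) (K k : Td d) : ℝ := ⨅ q, w₂ K k q

/-- `E_max(K,k) = max_q w₂(K; k, q)`. -/
def Emax (w₂ : Td d → Td d → Td d → ℝ) (K k : Td d) : ℝ := ⨆ q, w₂ K k q

/-- `m_K = min_{p,q} w₂(K; p, q)`. -/
def mK (w₂ : Td d → Td d → Td d → ℝ) (K : Td d) : ℝ := ⨅ x : Td d × Td d, w₂ K x.1 x.2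

/-- `M_K = max_{p,q} w₂(K; p, q)`. -/
def MK (w₂ : Td d → Td d → Td d → ℝ) (K : Td d) : ℝ := ⨆ x : Td d × Td d, w₂ K x.1 x.2

/-- The Fredholm determinant
`Δ_K(k; z) = w₁(K,k) − z − (1/2) ∫ v₁(t)² / (w₂(K;k,t) − z) dt`. -/
def Delta (v₁ : Td d → ℝ) (w₁ : Td d → Td d → ℝ) (w₂ : Td d → Td d → Td d → ℝ)
    (K k : Td d) (z : ℂ) : ℂ :=
  (w₁ K k : ℂ) - z - (1 / 2) * ∫ t, (v₁ t : ℂ) ^ 2 / ((w₂ K k t : ℂ) - z)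

/-- The interval `[E_min(K,k), E_max(K,k)]`, viewed inside `ℂ`. -/
def bandKk (w₂ : Td d → Td d → Td d → ℝ) (K k : Td d) : Set ℂ :=
  Complex.ofReal '' Set.Icc (Emin w₂ K k) (Emax w₂ K k)

/-- The interval `[m_K, M_K]`, viewed inside `ℂ`. -/
def bigBand (w₂ : Td d → Td d → Td d → ℝ) (K : Td d) : Set ℂ :=
  Complex.ofReal '' Set.Icc (mK w₂ K) (MK w₂ K)

/-- The two-particle branch
`Λ_K = {z : ∃ k, z ∉ [E_min(K,k), E_max(K,k)] ∧ Δ_K(k; z) = 0}`. -/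
def LamK (v₁ : Td d → ℝ) (w₁ : Td d → Td d → ℝ) (w₂ : Td d → Td d → Td d → ℝ)
    (K : Td d) : Set ℂ :=
  {z | ∃ k, z ∉ bandKk w₂ K k ∧ Delta v₁ w₁ w₂ K k z = 0}

/-- `Σ_K = [m_K, M_K] ∪ Λ_K`. -/
def SigK (v₁ : Td d → ℝ) (w₁ : Td d → Td d → ℝ) (w₂ : Td d → Td d → Td d → ℝ)
    (K : Td d) : Set ℂ :=
  bigBand w₂ K ∪ LamK v₁ w₁ w₂ K

/-- The defining equations of the `3×3` operator matrix `H(K)` acting on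
`ℂ ⊕ L²(T^d) ⊕ L²_sym((T^d)²)`:
`(H f)₀ = w₀(K) f₀ + ∫ v₀(t) f₁(t) dt`,
`(H f)₁(p) = v₀(p) f₀ + w₁(K; p) f₁(p) + ∫ v₁(t) f₂(p,t) dt`,
`(H f)₂(p,q) = (1/2)(v₁(p) f₁(q) + v₁(q) f₁(p)) + w₂(K; p,q) f₂(p,q)`. -/
def IsHamiltonian {d : ℕ} (w₀ v₀ v₁ : Td d → ℝ) (w₁ : Td d → Td d → ℝ)
    (w₂ : Td d → Td d → Td d → ℝ) (K : Td d) (H : H3 d →L[ℂ] H3 d) : Prop :=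
  ∀ f : H3 d,
    (p0 (H f) = (w₀ K : ℂ) * p0 f + (∫ t, (v₀ t : ℂ) * (p1 f) t)) ∧
    (⇑(p1 (H f)) =ᵐ[volume] fun p =>
        (v₀ p : ℂ) * p0 f + (w₁ K p : ℂ) * (p1 f) p +
          (∫ t, (v₁ t : ℂ) * (p2 f) (p, t))) ∧
    (⇑(p2 (H f)) =ᵐ[volume] fun x : Td d × Td d =>
        ((v₁ x.1 : ℂ) * (p1 f) x.2 + (v₁ x.2 : ℂ) * (p1 f) x.1) / 2 +
          (w₂ K x.1 x.2 : ℂ) * (p2 f) x)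

/-!
Let `z ∉ Σ_K`. Since `z` avoids the range of `w₂`, the two-particle block `H₂₂ - z` is invertible,
and eliminating the two-particle component leaves, on the one-particle component, the Schur
complement `Δ_K(·; z) - G` up to a rank one coupling to the zero-particle space. Here `G` is an
integral operator with continuous kernel, hence compact, and `Δ_K(·; z)` is continuous and
nowhere zero on the compact torus, so multiplication by it is invertible. Therefore `H(K) - z` is
left invertible modulo compact operators, which excludes an orthonormal Weyl sequence at `z`.
Finally, a spectral point of a bounded self-adjoint operator that admits no such sequence is an
isolated eigenvalue of finite multiplicity: off a finite-dimensional subspace `A - z` is bounded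
below, so it has closed range, and this persists near `z`.
-/

/-! ### Self-adjoint operators off the essential spectrum -/

section BoundedBelow

variable {𝕜 E F : Type*} [NontriviallyNormedField 𝕜] [NormedAddCommGroup E] [NormedSpace 𝕜 E]
  [NormedAddCommGroup F] [NormedSpace 𝕜 F] {T : E →L[𝕜] F} {V : Submodule 𝕜 E} {c : ℝ}

lemma isClosed_range_of_le_norm_of_coFG [CompleteSpace 𝕜] [CompleteSpace E] [V.CoFG]
    (hV : IsClosed (V : Set E)) (hc : 0 < c) (h : ∀ x ∈ V, c * ‖x‖ ≤ ‖T x‖) :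
    IsClosed (T.range : Set F) := by
  have : CompleteSpace V := hV.completeSpace_coe
  have hanti : AntilipschitzWith (Real.toNNReal c⁻¹) (T ∘L V.subtypeL) :=
    (T ∘L V.subtypeL).antilipschitz_of_bound fun x => by
      rw [Real.coe_toNNReal _ (by positivity), ← div_eq_inv_mul, le_div_iff₀' hc]
      exact h x x.2
  have hrange : Set.range (T ∘L V.subtypeL) = T '' V := by
    rw [ContinuousLinearMap.coe_comp, Set.range_comp, Submodule.coe_subtypeL,
      Submodule.coe_subtype, Subtype.range_coe]
  refine LinearMap.isClosed_range_of_isClosed_map_of_finiteDimensional_quotient (s := V) ?_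
  rw [Submodule.map_coe, ContinuousLinearMap.coe_coe, ← hrange]
  exact hanti.isClosed_range (T ∘L V.subtypeL).uniformContinuous

lemma finiteDimensional_ker_of_le_norm_of_coFG [hV : V.CoFG] (hc : 0 < c)
    (h : ∀ x ∈ V, c * ‖x‖ ≤ ‖T x‖) : FiniteDimensional 𝕜 T.ker := by
  refine Module.Finite.iff_fg.2 (hV.fg_of_disjoint (Submodule.disjoint_def.2 fun x hx hxV => ?_))
  have hTx : T x = 0 := hx
  exact norm_le_zero_iff.1 (nonpos_of_mul_nonpos_right (by simpa [hTx] using h x hxV) hc)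

end BoundedBelow

section Hilbert

variable {𝕜 E F : Type*} [RCLike 𝕜] [NormedAddCommGroup E] [InnerProductSpace 𝕜 E]
  [NormedAddCommGroup F] [InnerProductSpace 𝕜 F]

lemma orthogonal_coFG (V : Submodule 𝕜 E) [FiniteDimensional 𝕜 V] : Vᗮ.CoFG :=
  (Module.Finite.iff_fg.1 ‹_› : V.FG).cofg_of_isCompl V.isCompl_orthogonal

lemma exists_le_norm_of_isClosed_range [CompleteSpace E] [CompleteSpace F] {T : E →L[𝕜] F}
    (hT : IsClosed (T.range : Set F)) : ∃ c > 0, ∀ x ∈ T.kerᗮ, c * ‖x‖ ≤ ‖T x‖ := by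
  let S : T.kerᗮ →L[𝕜] F := T ∘L T.kerᗮ.subtypeL
  have : CompleteSpace T.ker := T.isClosed_ker.completeSpace_coe
  have hinj : Function.Injective S := by
    refine (injective_iff_map_eq_zero S).2 fun x hx => Subtype.ext ?_
    exact (Submodule.disjoint_def.1 T.ker.orthogonal_disjoint) x hx x.2
  have hrange : Set.range S = T.range := by
    refine Set.Subset.antisymm (Set.range_comp_subset_range _ T) ?_
    rintro _ ⟨x, rfl⟩
    obtain ⟨y, hy, w, hw, rfl⟩ := T.ker.exists_add_mem_mem_orthogonal x
    have hTy : T y = 0 := hy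
    exact ⟨⟨w, hw⟩, by simp [S, hTy]⟩
  obtain ⟨k, hk⟩ := S.antilipschitz_of_injective_of_isClosed_range hinj (hrange ▸ hT)
  refine ⟨(k + 1 : ℝ)⁻¹, by positivity, fun x hx => ?_⟩
  rw [inv_mul_le_iff₀ (by positivity)]
  calc ‖x‖ ≤ k * ‖T x‖ := hk.le_mul_norm (map_zero S) ⟨x, hx⟩
    _ ≤ (k + 1) * ‖T x‖ := by gcongr; simp

lemma isUnit_of_isSelfAdjoint_of_isClosed_range [CompleteSpace E] {T : E →L[𝕜] E}
    (hT : IsSelfAdjoint T) (hker : T.ker = ⊥) (hrange : IsClosed (T.range : Set E)) :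
    IsUnit T := by
  refine ContinuousLinearMap.isUnit_iff_bijective.2 ⟨LinearMap.ker_eq_bot.1 hker, ?_⟩
  have : CompleteSpace T.range := hrange.completeSpace_coe
  refine LinearMap.range_eq_top.1 (Submodule.orthogonal_eq_bot_iff.1 ?_)
  rw [ContinuousLinearMap.orthogonal_range, hT.adjoint_eq, hker]

lemma exists_orthonormal_of_forall_finiteDimensional {p : ℕ → E → Prop}
    (hp : ∀ u, Antitone fun n => p n u)
    (h : ∀ (n : ℕ) (V : Submodule 𝕜 E) [FiniteDimensional 𝕜 V], ∃ u ∈ Vᗮ, ‖u‖ = 1 ∧ p n u) :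
    ∃ u : ℕ → E, Orthonormal 𝕜 u ∧ ∀ n, p n (u n) := by
  classical
  obtain ⟨f, hf, hr⟩ := exists_seq_of_forall_finset_exists
    (fun x : ℕ × E => ‖x.2‖ = 1 ∧ p x.1 x.2) (fun x y => x.1 < y.1 ∧ inner 𝕜 x.2 y.2 = 0)
    fun s _ => by
      obtain ⟨u, hu, hu'⟩ := h (s.sup Prod.fst + 1) (Submodule.span 𝕜 (s.image Prod.snd))
      refine ⟨(_, u), hu', fun x hx => ⟨Nat.lt_succ_of_le (Finset.le_sup hx), ?_⟩⟩
      exact hu _ (Submodule.subset_span (Finset.mem_image_of_mem _ hx))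
  have hmono : StrictMono fun n => (f n).1 := fun m n hmn => (hr m n hmn).1
  refine ⟨fun n => (f n).2, ⟨fun n => (hf n).1, fun m n hmn => ?_⟩,
    fun n => hp _ (hmono.le_apply) (hf n).2⟩
  rcases hmn.lt_or_gt with hlt | hlt
  · exact (hr m n hlt).2
  · exact inner_eq_zero_symm.1 (hr n m hlt).2

end Hilbert

lemma isSelfAdjoint_sub_smul_one_of_mem_spectrum {A : Type*} [CStarAlgebra A] {a : A} {z : ℂ}
    (ha : IsSelfAdjoint a) (hz : z ∈ spectrum ℂ a) : IsSelfAdjoint (a - z • 1) := by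
  rw [ha.mem_spectrum_eq_re hz]
  exact ha.sub (.smul (Complex.conj_ofReal _) (.one A))

section Spectrum

variable {E : Type*} [NormedAddCommGroup E] [InnerProductSpace ℂ E] {A : E →L[ℂ] E} {z : ℂ}

lemma exists_le_norm_of_notMem_essSpec (hz : z ∉ essSpec A) :
    ∃ V : Submodule ℂ E, FiniteDimensional ℂ V ∧
      ∃ c > 0, ∀ u ∈ Vᗮ, c * ‖u‖ ≤ ‖(A - z • 1) u‖ := by
  contrapose! hz
  obtain ⟨u, hu, hlt⟩ := exists_orthonormal_of_forall_finiteDimensional (𝕜 := ℂ)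
    (p := fun n u => ‖(A - z • 1) u‖ < 1 / ((n : ℝ) + 1))
    (fun u m n hmn (hn : _ < _) => hn.trans_le (by gcongr)) fun n V hV => by
      obtain ⟨v, hv, hlt⟩ := hz V hV (1 / ((n : ℝ) + 1)) (by positivity)
      have hv0 : v ≠ 0 := by rintro rfl; simp at hlt
      refine ⟨(‖v‖ : ℂ)⁻¹ • v, Vᗮ.smul_mem _ hv, norm_smul_inv_norm hv0, ?_⟩
      rw [map_smul, norm_smul, norm_inv, Complex.norm_real, norm_norm,
        inv_mul_lt_iff₀ (norm_pos_iff.2 hv0), mul_comm]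
      exact hlt
  exact ⟨u, hu, squeeze_zero (fun _ => norm_nonneg _) (fun n => (hlt n).le)
    tendsto_one_div_add_atTop_nhds_zero_nat⟩

variable [CompleteSpace E]

lemma exists_eigenvector_of_mem_spectrum (hA : IsSelfAdjoint A) (hz : z ∈ spectrum ℂ A)
    (hrange : IsClosed ((A - z • (1 : E →L[ℂ] E)).range : Set E)) : ∃ u, u ≠ 0 ∧ A u = z • u := by
  by_contra! h
  refine hz ((IsUnit.sub_iff).1 ?_)
  refine isUnit_of_isSelfAdjoint_of_isClosed_range
    (isSelfAdjoint_sub_smul_one_of_mem_spectrum hA hz) ((Submodule.eq_bot_iff _).2 ?_) hrange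
  intro u hu
  by_contra hu0
  exact h u hu0 (sub_eq_zero.1 hu)

lemma notMem_closure_spectrum_diff_singleton (hA : IsSelfAdjoint A)
    [FiniteDimensional ℂ (A - z • (1 : E →L[ℂ] E)).ker]
    (hrange : IsClosed ((A - z • (1 : E →L[ℂ] E)).range : Set E)) :
    z ∉ closure (spectrum ℂ A \ {z}) := by
  set N := (A - z • (1 : E →L[ℂ] E)).ker
  have : Nᗮ.CoFG := orthogonal_coFG N
  obtain ⟨c, hc, hlow⟩ := exists_le_norm_of_isClosed_range hrange
  rw [Metric.mem_closure_iff]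
  push Not
  refine ⟨c, hc, fun w ⟨hw, hwz⟩ => ?_⟩
  by_contra! hlt
  rw [dist_eq_norm'] at hlt
  have hw_low (x : E) (hx : x ∈ Nᗮ) : (c - ‖w - z‖) * ‖x‖ ≤ ‖(A - w • (1 : E →L[ℂ] E)) x‖ :=
    calc (c - ‖w - z‖) * ‖x‖ ≤ ‖(A - z • (1 : E →L[ℂ] E)) x‖ - ‖(w - z) • x‖ := by
          rw [sub_mul, norm_smul]
          gcongr
          exact hlow x hx
      _ ≤ ‖(A - z • (1 : E →L[ℂ] E)) x - (w - z) • x‖ := norm_sub_norm_le _ _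
      _ = ‖(A - w • (1 : E →L[ℂ] E)) x‖ := by simp [sub_smul]
  obtain ⟨u, hu0, hu⟩ := exists_eigenvector_of_mem_spectrum hA hw
    (isClosed_range_of_le_norm_of_coFG N.isClosed_orthogonal (sub_pos.2 hlt) hw_low)
  have huN : u ∈ Nᗮ := fun v hv =>
    hA.isSymmetric.orthogonalFamily_eigenspaces (Ne.symm hwz)
      ⟨v, Module.End.mem_eigenspace_iff.2 (sub_eq_zero.1 hv)⟩
      ⟨u, Module.End.mem_eigenspace_iff.2 hu⟩
  have hle : c * ‖u‖ ≤ ‖w - z‖ * ‖u‖ := by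
    simpa [hu, ← sub_smul, norm_smul] using hlow u huN
  exact hlt.not_ge (le_of_mul_le_mul_right hle (norm_pos_iff.2 hu0))

theorem spectrum_diff_essSpec_subset_discSpec (hA : IsSelfAdjoint A) :
    spectrum ℂ A \ essSpec A ⊆ discSpec A := by
  rintro z ⟨hz, hess⟩
  obtain ⟨V, hV, c, hc, hlow⟩ := exists_le_norm_of_notMem_essSpec hess
  have : Vᗮ.CoFG := orthogonal_coFG V
  have hrange := isClosed_range_of_le_norm_of_coFG V.isClosed_orthogonal hc hlow
  have hker := finiteDimensional_ker_of_le_norm_of_coFG hc hlow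
  exact ⟨exists_eigenvector_of_mem_spectrum hA hz hrange,
    notMem_closure_spectrum_diff_singleton hA hrange, hker⟩

end Spectrum

/-! ### Factorization modulo compact operators -/

section FactorsModCompact

variable {𝕜 E F G G' : Type*} [NontriviallyNormedField 𝕜]
  [NormedAddCommGroup E] [NormedSpace 𝕜 E] [NormedAddCommGroup F] [NormedSpace 𝕜 F]
  [NormedAddCommGroup G] [NormedSpace 𝕜 G] [NormedAddCommGroup G'] [NormedSpace 𝕜 G']

/-- `S` factors through `T` modulo compact operators: `S = L ∘ T + C` with `L` bounded and `C`
compact. For `S = 1` this says that `T` is left invertible modulo compact operators. -/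
def FactorsModCompact (T : E →L[𝕜] F) (S : E →L[𝕜] G) : Prop :=
  ∃ L : F →L[𝕜] G, IsCompactOperator (S - L ∘L T)

namespace FactorsModCompact

variable {T : E →L[𝕜] F} {S S' : E →L[𝕜] G}

lemma of_isCompactOperator (T : E →L[𝕜] F) (hS : IsCompactOperator S) : FactorsModCompact T S :=
  ⟨0, by simpa using hS⟩

lemma comp_self (T : E →L[𝕜] F) (L : F →L[𝕜] G) : FactorsModCompact T (L ∘L T) :=
  ⟨L, by simpa using isCompactOperator_zero⟩

lemma add (hS : FactorsModCompact T S) (hS' : FactorsModCompact T S') :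
    FactorsModCompact T (S + S') := by
  obtain ⟨L, hL⟩ := hS
  obtain ⟨L', hL'⟩ := hS'
  refine ⟨L + L', ?_⟩
  rw [ContinuousLinearMap.add_comp, add_sub_add_comm]
  exact hL.add hL'

lemma clm_comp (hS : FactorsModCompact T S) (B : G →L[𝕜] G') : FactorsModCompact T (B ∘L S) := by
  obtain ⟨L, hL⟩ := hS
  refine ⟨B ∘L L, ?_⟩
  rw [ContinuousLinearMap.comp_assoc, ← ContinuousLinearMap.comp_sub]
  exact hL.clm_comp B

lemma sub (hS : FactorsModCompact T S) (hS' : FactorsModCompact T S') :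
    FactorsModCompact T (S - S') := by
  obtain ⟨L, hL⟩ := hS
  obtain ⟨L', hL'⟩ := hS'
  refine ⟨L - L', ?_⟩
  rw [ContinuousLinearMap.sub_comp, sub_sub_sub_comm]
  exact hL.sub hL'

end FactorsModCompact

lemma exists_subseq_tendsto_of_factorsModCompact_one {T : E →L[𝕜] F}
    (hT : FactorsModCompact T (1 : E →L[𝕜] E)) {u : ℕ → E} {r : ℝ} (hu : ∀ n, ‖u n‖ ≤ r)
    (hlim : Tendsto (fun n => T (u n)) atTop (𝓝 0)) :
    ∃ (a : E) (φ : ℕ → ℕ), StrictMono φ ∧ Tendsto (u ∘ φ) atTop (𝓝 a) := by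
  obtain ⟨L, hC⟩ := hT
  set C := (1 : E →L[𝕜] E) - L ∘L T with hC_def
  obtain ⟨K, hK, hCK⟩ := hC.image_closedBall_subset_compact (f := (C : E →ₗ[𝕜] E)) r
  obtain ⟨a, -, φ, hφ, ha⟩ := hK.tendsto_subseq (x := fun n => C (u n))
    fun n => hCK ⟨u n, by simpa using hu n, rfl⟩
  refine ⟨a, φ, hφ, ?_⟩
  have hL : Tendsto (fun n => L (T (u (φ n)))) atTop (𝓝 0) := by
    simpa [Function.comp_def] using (L.continuous.tendsto 0).comp (hlim.comp hφ.tendsto_atTop)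
  simpa [hC_def, Function.comp_def] using ha.add hL

end FactorsModCompact

lemma not_cauchySeq_of_orthonormal {𝕜 E : Type*} [RCLike 𝕜] [NormedAddCommGroup E]
    [InnerProductSpace 𝕜 E] {u : ℕ → E} (hu : Orthonormal 𝕜 u) : ¬ CauchySeq u := by
  intro hcauchy
  obtain ⟨N, hN⟩ := Metric.cauchySeq_iff'.1 hcauchy 1 one_pos
  have hlt : ‖u (N + 1) - u N‖ < 1 := by simpa [dist_eq_norm] using hN (N + 1) N.le_succ
  have hsq : ‖u (N + 1) - u N‖ ^ 2 = 2 := by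
    rw [@norm_sub_sq 𝕜, hu.2 N.succ_ne_self, hu.1, hu.1]
    norm_num
  nlinarith [norm_nonneg (u (N + 1) - u N)]

theorem notMem_essSpec_of_factorsModCompact_one {E : Type*} [NormedAddCommGroup E]
    [InnerProductSpace ℂ E] {A : E →L[ℂ] E} {z : ℂ}
    (h : FactorsModCompact (A - z • (1 : E →L[ℂ] E)) (1 : E →L[ℂ] E)) : z ∉ essSpec A := by
  rintro ⟨u, hu, hlim⟩
  obtain ⟨a, φ, hφ, ha⟩ := exists_subseq_tendsto_of_factorsModCompact_one h
    (fun n => (hu.1 n).le) (tendsto_zero_iff_norm_tendsto_zero.2 hlim)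
  exact not_cauchySeq_of_orthonormal (hu.comp φ hφ.injective) ha.cauchySeq

/-! ### Multiplication and integral operators on compact spaces -/

section MulLp

open scoped ENNReal

variable {𝕜 X : Type*} [RCLike 𝕜] [TopologicalSpace X] [CompactSpace X]
  [MeasurableSpace X] [BorelSpace X] (p : ℝ≥0∞) [Fact (1 ≤ p)] (μ : Measure X) [IsFiniteMeasure μ]

/-- The operator of multiplication by a continuous function on `L^p` of a compact space. -/
def mulLp (φ : C(X, 𝕜)) : Lp 𝕜 p μ →L[𝕜] Lp 𝕜 p μ :=
  (ContinuousLinearMap.mul 𝕜 𝕜).holderL μ ∞ p p (ContinuousMap.toLp ∞ μ 𝕜 φ)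

variable {p μ}

lemma coeFn_mulLp (φ : C(X, 𝕜)) (f : Lp 𝕜 p μ) : mulLp p μ φ f =ᵐ[μ] fun x => φ x * f x := by
  filter_upwards [(ContinuousLinearMap.mul 𝕜 𝕜).coeFn_holder (r := p)
    (ContinuousMap.toLp ∞ μ 𝕜 φ) f, ContinuousMap.coeFn_toLp (p := ∞) (𝕜 := 𝕜) μ φ] with x hx hφ
  exact hx.trans (by rw [hφ, ContinuousLinearMap.mul_apply'])

lemma mulLp_comp_mulLp_of_mul_eq_one {φ ψ : C(X, 𝕜)} (h : ψ * φ = 1) :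
    mulLp p μ ψ ∘L mulLp p μ φ = 1 := by
  ext1 f
  refine Lp.ext ?_
  filter_upwards [coeFn_mulLp ψ (mulLp p μ φ f), coeFn_mulLp φ f] with x hψ hφ
  have hx : ψ x * φ x = 1 := DFunLike.congr_fun h x
  rw [ContinuousLinearMap.comp_apply, hψ, hφ, ← mul_assoc, hx, one_mul, one_apply_eq_self]

end MulLp

section KernelOperator

variable {𝕜 X Y F G : Type*} [TopologicalSpace X] [CompactSpace X]

section Eval

variable [NontriviallyNormedField 𝕜] [NormedAddCommGroup F] [NormedSpace 𝕜 F]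
  [NormedAddCommGroup G] [NormedSpace 𝕜 G]

open BoundedContinuousFunction

/-- The operator `g ↦ (x ↦ Φ x g)` from `F` to bounded continuous functions attached to a
norm-continuous family `Φ` of operators over a compact space. -/
def evalFamily (Φ : C(X, F →L[𝕜] G)) : F →L[𝕜] X →ᵇ G :=
  LinearMap.mkContinuous
    { toFun g := mkOfCompact ⟨fun x => Φ x g, by fun_prop⟩
      map_add' g h := by ext x; simp
      map_smul' a g := by ext x; simp }
    ‖Φ‖ fun g => (norm_le (by positivity)).2 fun x => (Φ x).le_of_opNorm_le (Φ.norm_coe_le_norm x) g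

lemma isCompactOperator_evalFamily [ProperSpace G] (Φ : C(X, F →L[𝕜] G)) :
    IsCompactOperator (evalFamily Φ) := by
  refine (isCompactOperator_iff_isCompact_closure_image_closedBall
    (evalFamily Φ : F →ₗ[𝕜] X →ᵇ G) one_pos).2 ?_
  refine arzela_ascoli (Metric.closedBall 0 ‖Φ‖) (isCompact_closedBall _ _) _ ?_ fun x₀ => ?_
  · rintro _ x ⟨g, hg, rfl⟩
    rw [mem_closedBall_zero_iff] at hg ⊢
    exact (Φ x).le_of_opNorm_le_of_le (Φ.norm_coe_le_norm x) hg |>.trans_eq (mul_one _)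
  · refine Metric.equicontinuousAt_iff_right.2 fun ε hε => ?_
    filter_upwards [Φ.continuous.tendsto x₀ (Metric.ball_mem_nhds _ hε)] with x hx
    rintro ⟨_, g, hg, rfl⟩
    rw [mem_closedBall_zero_iff] at hg
    rw [mem_preimage, mem_ball_iff_norm'] at hx
    calc dist (Φ x₀ g) (Φ x g) = ‖(Φ x₀ - Φ x) g‖ := by simp [dist_eq_norm]
      _ ≤ ‖Φ x₀ - Φ x‖ * 1 := (Φ x₀ - Φ x).le_of_opNorm_le_of_le le_rfl hg
      _ < ε := by rwa [mul_one]

end Eval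

open scoped ENNReal BoundedContinuousFunction

variable [RCLike 𝕜] [TopologicalSpace Y] [CompactSpace Y] [MeasurableSpace Y] [BorelSpace Y]
  (p q : ℝ≥0∞) [Fact (1 ≤ p)] [Fact (1 ≤ q)] [p.HolderConjugate q] (μ : Measure Y)
  [IsFiniteMeasure μ]

/-- The integral operator `g ↦ ∫ k(·, y) g(y) dμ(y)` with continuous kernel `k`, from `L^q(μ)` to
bounded continuous functions; `p` is the exponent conjugate to `q`. -/
def kernelOperator (k : C(X × Y, 𝕜)) : Lp 𝕜 q μ →L[𝕜] X →ᵇ 𝕜 :=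
  evalFamily ⟨fun x => (ContinuousLinearMap.mul 𝕜 𝕜).lpPairing μ p q
    (ContinuousMap.toLp p μ 𝕜 (k.curry x)), by fun_prop⟩

lemma kernelOperator_apply (k : C(X × Y, 𝕜)) (g : Lp 𝕜 q μ) (x : X) :
    kernelOperator p q μ k g x = ∫ y, k (x, y) * g y ∂μ := by
  refine ((ContinuousLinearMap.mul 𝕜 𝕜).lpPairing_eq_integral _ g).trans (integral_congr_ae ?_)
  filter_upwards [ContinuousMap.coeFn_toLp (p := p) (𝕜 := 𝕜) μ (k.curry x)] with y hy
  rw [hy, ContinuousLinearMap.mul_apply', ContinuousMap.curry_apply]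

lemma isCompactOperator_kernelOperator (k : C(X × Y, 𝕜)) :
    IsCompactOperator (kernelOperator p q μ k) :=
  isCompactOperator_evalFamily _

end KernelOperator

/-! ### Components of the Fock space -/

/-- The Hilbert space inner product. The instance is given explicitly because instance search may
return the inner product of the `C⋆`-module structure instead. -/
local notation "⟪" x "," y "⟫" => @inner ℂ _ InnerProductSpace.toInner x y

section L2Product

variable (𝕜 E F : Type*) [NontriviallyNormedField 𝕜] [NormedAddCommGroup E] [NormedSpace 𝕜 E]
  [NormedAddCommGroup F] [NormedSpace 𝕜 F]

/-- The inclusion of the first summand into an `L²` direct sum. -/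
def prodInl : E →L[𝕜] WithLp 2 (E × F) :=
  (WithLp.prodContinuousLinearEquiv 2 𝕜 E F).symm.toContinuousLinearMap ∘L
    ContinuousLinearMap.inl 𝕜 E F

/-- The inclusion of the second summand into an `L²` direct sum. -/
def prodInr : F →L[𝕜] WithLp 2 (E × F) :=
  (WithLp.prodContinuousLinearEquiv 2 𝕜 E F).symm.toContinuousLinearMap ∘L
    ContinuousLinearMap.inr 𝕜 E F

variable {E F}

lemma prodInl_add_prodInr (f : WithLp 2 (E × F)) :
    prodInl 𝕜 E F f.fst + prodInr 𝕜 E F f.snd = f :=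
  WithLp.ofLp_injective 2 (Prod.fst_add_snd f.ofLp)

end L2Product

section Components

variable (d)

/-- The projection of `H` onto the zero-particle space. -/
def projZero : H3 d →L[ℂ] ℂ := WithLp.fstL 2 ℂ _ _

/-- The projection of `H` onto the one-particle space. -/
def projOne : H3 d →L[ℂ] L2 d := WithLp.fstL 2 ℂ _ _ ∘L WithLp.sndL 2 ℂ _ _

/-- The projection of `H` onto the two-particle space; unlike the value of `p2`, its value is an
element of the subspace of symmetric functions. -/
def projTwo : H3 d →L[ℂ] L2sym d := WithLp.sndL 2 ℂ _ _ ∘L WithLp.sndL 2 ℂ _ _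

/-- The inclusion of the zero-particle space into `H`. -/
def inclZero : ℂ →L[ℂ] H3 d := prodInl ℂ ℂ _

/-- The inclusion of the one-particle space into `H`. -/
def inclOne : L2 d →L[ℂ] H3 d := prodInr ℂ ℂ _ ∘L prodInl ℂ _ _

/-- The inclusion of the two-particle space into `H`. -/
def inclTwo : L2sym d →L[ℂ] H3 d := prodInr ℂ ℂ _ ∘L prodInr ℂ _ _

variable {d}

@[simp] lemma projZero_inclZero (a : ℂ) : projZero d (inclZero d a) = a := rfl
@[simp] lemma projOne_inclZero (a : ℂ) : projOne d (inclZero d a) = 0 := rfl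
@[simp] lemma projTwo_inclZero (a : ℂ) : projTwo d (inclZero d a) = 0 := rfl
@[simp] lemma projZero_inclOne (g : L2 d) : projZero d (inclOne d g) = 0 := rfl
@[simp] lemma projOne_inclOne (g : L2 d) : projOne d (inclOne d g) = g := rfl
@[simp] lemma projTwo_inclOne (g : L2 d) : projTwo d (inclOne d g) = 0 := rfl
@[simp] lemma projZero_inclTwo (h : L2sym d) : projZero d (inclTwo d h) = 0 := rfl
@[simp] lemma projOne_inclTwo (h : L2sym d) : projOne d (inclTwo d h) = 0 := rfl
@[simp] lemma projTwo_inclTwo (h : L2sym d) : projTwo d (inclTwo d h) = h := rfl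

lemma incl_proj_add (f : H3 d) :
    inclZero d (projZero d f) + inclOne d (projOne d f) + inclTwo d (projTwo d f) = f := by
  refine Eq.trans ?_ (prodInl_add_prodInr ℂ f)
  rw [← prodInl_add_prodInr ℂ f.snd, map_add, ← add_assoc]
  rfl

lemma apply_eq_sum_incl (H : H3 d →L[ℂ] H3 d) (f : H3 d) :
    H f = H (inclZero d (projZero d f)) + H (inclOne d (projOne d f)) +
      H (inclTwo d (projTwo d f)) := by
  rw [← map_add, ← map_add, incl_proj_add]

lemma inner_eq_sum_proj (f g : H3 d) :
    ⟪f, g⟫ = ⟪projZero d f, projZero d g⟫ + ⟪projOne d f, projOne d g⟫ +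
      ⟪projTwo d f, projTwo d g⟫ := by
  rw [WithLp.prod_inner_apply, WithLp.prod_inner_apply, ← add_assoc]
  rfl

end Components

section SymmetricFunctions

lemma mem_symSub_iff (f : L2two d) :
    f ∈ symSub d ↔ (fun x : Td d × Td d => f x.swap) =ᵐ[volume] f := by
  rw [symSub, LinearMap.mem_ker, LinearMap.sub_apply, sub_eq_zero, LinearMap.id_apply,
    Lp.ext_iff]
  have hswap : swapL d f =ᵐ[volume] fun x => f x.swap :=
    Lp.coeFn_compMeasurePreserving f Measure.measurePreserving_swap
  exact ⟨hswap.symm.trans, hswap.trans⟩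

/-- Multiplication by a continuous symmetric function on the two-particle space. -/
def mulSym (φ : C(Td d × Td d, ℂ)) (hφ : ∀ x, φ x.swap = φ x) : L2sym d →L[ℂ] L2sym d :=
  (mulLp 2 volume φ ∘L (symSub d).subtypeL).codRestrict (symSub d) fun f => by
    rw [ContinuousLinearMap.comp_apply, Submodule.subtypeL_apply, mem_symSub_iff]
    have hmul := coeFn_mulLp φ (f : L2two d)
    filter_upwards [hmul, (mem_symSub_iff _).1 f.2,
      Measure.measurePreserving_swap.quasiMeasurePreserving.ae hmul] with x hx hf hswap
    rw [hswap, hx, hφ, hf]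

lemma coeFn_mulSym (φ : C(Td d × Td d, ℂ)) (hφ : ∀ x, φ x.swap = φ x) (f : L2sym d) :
    (mulSym φ hφ f : L2two d) =ᵐ[volume] fun x => φ x * (f : L2two d) x :=
  coeFn_mulLp φ (f : L2two d)

end SymmetricFunctions

/-! ### Self-adjointness of the operator matrix -/

namespace IsHamiltonian

variable {w₀ v₀ v₁ : Td d → ℝ} {w₁ : Td d → Td d → ℝ} {w₂ : Td d → Td d → Td d → ℝ}
  {K : Td d} {H : H3 d →L[ℂ] H3 d}

lemma projZero_apply (hH : IsHamiltonian w₀ v₀ v₁ w₁ w₂ K H) (f : H3 d) :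
    projZero d (H f) = w₀ K * projZero d f + ∫ t, (v₀ t : ℂ) * projOne d f t :=
  (hH f).1

lemma coeFn_projOne_apply (hH : IsHamiltonian w₀ v₀ v₁ w₁ w₂ K H) (f : H3 d) :
    projOne d (H f) =ᵐ[volume] fun p => (v₀ p : ℂ) * projZero d f + w₁ K p * projOne d f p +
      ∫ t, (v₁ t : ℂ) * (projTwo d f : L2two d) (p, t) :=
  (hH f).2.1

lemma coeFn_projTwo_apply (hH : IsHamiltonian w₀ v₀ v₁ w₁ w₂ K H) (f : H3 d) :
    (projTwo d (H f) : L2two d) =ᵐ[volume] fun x =>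
      ((v₁ x.1 : ℂ) * projOne d f x.2 + v₁ x.2 * projOne d f x.1) / 2 +
        w₂ K x.1 x.2 * (projTwo d f : L2two d) x :=
  (hH f).2.2

lemma projZero_apply_inclZero (hH : IsHamiltonian w₀ v₀ v₁ w₁ w₂ K H) (a : ℂ) :
    projZero d (H (inclZero d a)) = w₀ K * a := by
  simp [hH.projZero_apply]

lemma projZero_apply_inclOne (hH : IsHamiltonian w₀ v₀ v₁ w₁ w₂ K H) (g : L2 d) :
    projZero d (H (inclOne d g)) = ∫ t, (v₀ t : ℂ) * g t := by
  simp [hH.projZero_apply]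

lemma projZero_apply_inclTwo (hH : IsHamiltonian w₀ v₀ v₁ w₁ w₂ K H) (h : L2sym d) :
    projZero d (H (inclTwo d h)) = 0 := by
  simp [hH.projZero_apply]

lemma coeFn_projOne_apply_inclZero (hH : IsHamiltonian w₀ v₀ v₁ w₁ w₂ K H) (a : ℂ) :
    projOne d (H (inclZero d a)) =ᵐ[volume] fun p => (v₀ p : ℂ) * a := by
  simpa using hH.coeFn_projOne_apply (inclZero d a)

lemma coeFn_projOne_apply_inclOne (hH : IsHamiltonian w₀ v₀ v₁ w₁ w₂ K H) (g : L2 d) :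
    projOne d (H (inclOne d g)) =ᵐ[volume] fun p => (w₁ K p : ℂ) * g p := by
  simpa using hH.coeFn_projOne_apply (inclOne d g)

lemma coeFn_projOne_apply_inclTwo (hH : IsHamiltonian w₀ v₀ v₁ w₁ w₂ K H) (h : L2sym d) :
    projOne d (H (inclTwo d h)) =ᵐ[volume] fun p => ∫ t, (v₁ t : ℂ) * (h : L2two d) (p, t) := by
  simpa using hH.coeFn_projOne_apply (inclTwo d h)

lemma projTwo_apply_inclZero (hH : IsHamiltonian w₀ v₀ v₁ w₁ w₂ K H) (a : ℂ) :
    projTwo d (H (inclZero d a)) = 0 := by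
  refine Subtype.ext (Lp.ext ?_)
  filter_upwards [hH.coeFn_projTwo_apply (inclZero d a)] with x hx
  simp [hx]

lemma coeFn_projTwo_apply_inclOne (hH : IsHamiltonian w₀ v₀ v₁ w₁ w₂ K H) (g : L2 d) :
    (projTwo d (H (inclOne d g)) : L2two d) =ᵐ[volume]
      fun x => ((v₁ x.1 : ℂ) * g x.2 + v₁ x.2 * g x.1) / 2 := by
  simpa using hH.coeFn_projTwo_apply (inclOne d g)

lemma coeFn_projTwo_apply_inclTwo (hH : IsHamiltonian w₀ v₀ v₁ w₁ w₂ K H) (h : L2sym d) :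
    (projTwo d (H (inclTwo d h)) : L2two d) =ᵐ[volume]
      fun x => (w₂ K x.1 x.2 : ℂ) * (h : L2two d) x := by
  simpa using hH.coeFn_projTwo_apply (inclTwo d h)

lemma inner_projZero_apply_inclOne (hH : IsHamiltonian w₀ v₀ v₁ w₁ w₂ K H) (g : L2 d) (a : ℂ) :
    ⟪projZero d (H (inclOne d g)), a⟫ = ⟪g, projOne d (H (inclZero d a))⟫ := by
  rw [hH.projZero_apply_inclOne, L2.inner_def, RCLike.inner_apply, ← integral_conj,
    ← integral_const_mul]
  refine integral_congr_ae ?_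
  filter_upwards [hH.coeFn_projOne_apply_inclZero a] with p hp
  rw [hp, RCLike.inner_apply, map_mul, conj_ofReal]
  ring

lemma inner_projOne_apply_inclOne (hH : IsHamiltonian w₀ v₀ v₁ w₁ w₂ K H) (g g' : L2 d) :
    ⟪projOne d (H (inclOne d g)), g'⟫ = ⟪g, projOne d (H (inclOne d g'))⟫ := by
  rw [L2.inner_def, L2.inner_def]
  refine integral_congr_ae ?_
  filter_upwards [hH.coeFn_projOne_apply_inclOne g, hH.coeFn_projOne_apply_inclOne g'] with p hp hp'
  rw [hp, hp', RCLike.inner_apply, RCLike.inner_apply, map_mul, conj_ofReal]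
  ring

lemma inner_projTwo_apply_inclTwo (hH : IsHamiltonian w₀ v₀ v₁ w₁ w₂ K H) (h h' : L2sym d) :
    ⟪projTwo d (H (inclTwo d h)), h'⟫ = ⟪h, projTwo d (H (inclTwo d h'))⟫ := by
  rw [Submodule.coe_inner, Submodule.coe_inner, L2.inner_def, L2.inner_def]
  refine integral_congr_ae ?_
  filter_upwards [hH.coeFn_projTwo_apply_inclTwo h, hH.coeFn_projTwo_apply_inclTwo h'] with x hx hx'
  rw [hx, hx', RCLike.inner_apply, RCLike.inner_apply, map_mul, conj_ofReal]
  ring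

lemma inner_projOne_apply_inclTwo (hv₁ : Continuous v₁) (hH : IsHamiltonian w₀ v₀ v₁ w₁ w₂ K H)
    (h : L2sym d) (g : L2 d) :
    ⟪projOne d (H (inclTwo d h)), g⟫ = ⟪h, projTwo d (H (inclOne d g))⟫ := by
  let F : Td d × Td d → ℂ := fun x => v₁ x.2 * (g x.1 * starRingEnd ℂ ((h : L2two d) x))
  have hF : Integrable F (volume.prod volume) := by
    obtain ⟨c, hc⟩ := (isCompact_range hv₁).isBounded.exists_norm_le
    have hg : MemLp (fun x : Td d × Td d => g x.1) 2 (volume.prod volume) :=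
      (Lp.memLp g).comp_fst _
    refine (hg.integrable_mul (Lp.memLp (h : L2two d)).star).bdd_mul (c := c) ?_ ?_
    · exact Continuous.aestronglyMeasurable (by fun_prop)
    · exact .of_forall fun x => by simpa using hc _ ⟨x.2, rfl⟩
  have hleft : ⟪projOne d (H (inclTwo d h)), g⟫ = ∫ x, F x ∂volume.prod volume := by
    rw [integral_prod _ hF, L2.inner_def]
    refine integral_congr_ae ?_
    filter_upwards [hH.coeFn_projOne_apply_inclTwo h] with p hp
    rw [hp, RCLike.inner_apply, ← integral_conj, ← integral_const_mul]
    congr with t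
    rw [map_mul, conj_ofReal]
    exact mul_left_comm _ _ _
  have hright : ⟪h, projTwo d (H (inclOne d g))⟫ =
      ∫ x, (F x.swap / 2 + F x / 2) ∂volume.prod volume := by
    rw [Submodule.coe_inner, L2.inner_def]
    refine integral_congr_ae ?_
    filter_upwards [hH.coeFn_projTwo_apply_inclOne g, (mem_symSub_iff _).1 h.2] with x hx hswap
    rw [hx, RCLike.inner_apply]
    simp only [F, hswap, Prod.fst_swap, Prod.snd_swap]
    ring
  have hsum := integral_add (hF.swap.div_const 2) (hF.div_const 2)
  simp only [Function.comp_apply, integral_div, integral_prod_swap, add_halves] at hsum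
  rw [hleft, hright, hsum]

lemma isSelfAdjoint (hv₁ : Continuous v₁) (hH : IsHamiltonian w₀ v₀ v₁ w₁ w₂ K H) :
    IsSelfAdjoint H := by
  rw [ContinuousLinearMap.isSelfAdjoint_iff_isSymmetric]
  intro f g
  change ⟪H f, g⟫ = ⟪f, H g⟫
  have hone (a : ℂ) (g : L2 d) :
      ⟪a, projZero d (H (inclOne d g))⟫ = ⟪projOne d (H (inclZero d a)), g⟫ := by
    rw [← inner_conj_symm, hH.inner_projZero_apply_inclOne, inner_conj_symm]
  have htwo (g : L2 d) (h : L2sym d) :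
      ⟪g, projOne d (H (inclTwo d h))⟫ = ⟪projTwo d (H (inclOne d g)), h⟫ := by
    rw [← inner_conj_symm, hH.inner_projOne_apply_inclTwo hv₁, inner_conj_symm]
  have hzero (a b : ℂ) : ⟪projZero d (H (inclZero d a)), b⟫ =
      ⟪a, projZero d (H (inclZero d b))⟫ := by
    rw [hH.projZero_apply_inclZero, hH.projZero_apply_inclZero, RCLike.inner_apply,
      RCLike.inner_apply, map_mul, conj_ofReal]
    ring
  rw [inner_eq_sum_proj, inner_eq_sum_proj, apply_eq_sum_incl H f, apply_eq_sum_incl H g]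
  simp only [map_add, inner_add_left, inner_add_right, hzero, hone, htwo,
    hH.inner_projZero_apply_inclOne, hH.inner_projOne_apply_inclOne,
    hH.inner_projOne_apply_inclTwo hv₁, hH.inner_projTwo_apply_inclTwo, hH.projZero_apply_inclTwo,
    hH.projTwo_apply_inclZero, inner_zero_left, inner_zero_right]
  ring

end IsHamiltonian

/-! ### The Schur complement -/

section SchurComplement

variable {w₀ v₀ v₁ : Td d → ℝ} {w₁ : Td d → Td d → ℝ} {w₂ : Td d → Td d → Td d → ℝ}
  {K : Td d} {H : H3 d →L[ℂ] H3 d} {z : ℂ}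

lemma mK_le (hw₂ : Continuous fun x : Td d × Td d => w₂ K x.1 x.2) (p q : Td d) :
    mK w₂ K ≤ w₂ K p q :=
  ciInf_le (isCompact_range hw₂).bddBelow (p, q)

lemma le_MK (hw₂ : Continuous fun x : Td d × Td d => w₂ K x.1 x.2) (p q : Td d) :
    w₂ K p q ≤ MK w₂ K :=
  le_ciSup (isCompact_range hw₂).bddAbove (p, q)

lemma bandKk_subset_bigBand (hw₂ : Continuous fun x : Td d × Td d => w₂ K x.1 x.2) (k : Td d) :
    bandKk w₂ K k ⊆ bigBand w₂ K :=
  image_mono <| Icc_subset_Icc (le_ciInf fun q => mK_le hw₂ k q) (ciSup_le fun q => le_MK hw₂ k q)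

lemma ofReal_sub_ne_zero_of_notMem_bigBand (hw₂ : Continuous fun x : Td d × Td d => w₂ K x.1 x.2)
    (hz : z ∉ bigBand w₂ K) (p q : Td d) : (w₂ K p q : ℂ) - z ≠ 0 := fun h =>
  hz ⟨w₂ K p q, ⟨mK_le hw₂ p q, le_MK hw₂ p q⟩, sub_eq_zero.1 h⟩

lemma Delta_ne_zero_of_notMem_SigK (hw₂ : Continuous fun x : Td d × Td d => w₂ K x.1 x.2)
    (hz : z ∉ SigK v₁ w₁ w₂ K) (k : Td d) : Delta v₁ w₁ w₂ K k z ≠ 0 := fun h =>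
  hz <| .inr ⟨k, fun hk => hz <| .inl <| bandKk_subset_bigBand hw₂ k hk, h⟩

lemma continuous_inv_ofReal_sub (hw₂ : Continuous fun x : Td d × Td d => w₂ K x.1 x.2)
    (hz : z ∉ bigBand w₂ K) : Continuous fun x : Td d × Td d => ((w₂ K x.1 x.2 : ℂ) - z)⁻¹ :=
  Continuous.inv₀ (by fun_prop) fun x => ofReal_sub_ne_zero_of_notMem_bigBand hw₂ hz x.1 x.2

lemma continuous_Delta (hv₁ : Continuous v₁) (hw₁ : Continuous (w₁ K))
    (hw₂ : Continuous fun x : Td d × Td d => w₂ K x.1 x.2) (hz : z ∉ bigBand w₂ K) :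
    Continuous fun k => Delta v₁ w₁ w₂ K k z := by
  have hint : Continuous fun k => ∫ t in univ, (v₁ t : ℂ) ^ 2 / ((w₂ K k t : ℂ) - z) := by
    refine continuous_parametric_integral_of_continuous ?_ isCompact_univ
    rw [Function.uncurry_def]
    exact Continuous.div (by fun_prop) (by fun_prop) fun x =>
      ofReal_sub_ne_zero_of_notMem_bigBand hw₂ hz x.1 x.2
  rw [Measure.restrict_univ] at hint
  exact (Continuous.sub (by fun_prop) continuous_const).sub (continuous_const.mul hint)

/-- The resolvent `(H₂₂ - z)⁻¹` of the two-particle block, multiplication by `(w₂ - z)⁻¹`. -/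
def resolventTwo (hw₂ : Continuous fun x : Td d × Td d => w₂ K x.1 x.2)
    (hsym : ∀ p q, w₂ K p q = w₂ K q p) (hz : z ∉ bigBand w₂ K) : L2sym d →L[ℂ] L2sym d :=
  mulSym ⟨_, continuous_inv_ofReal_sub hw₂ hz⟩ fun x =>
    congrArg (fun a : ℝ => ((a : ℂ) - z)⁻¹) (hsym x.2 x.1)

lemma coeFn_resolventTwo (hw₂ : Continuous fun x : Td d × Td d => w₂ K x.1 x.2)
    (hsym : ∀ p q, w₂ K p q = w₂ K q p) (hz : z ∉ bigBand w₂ K) (h : L2sym d) :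
    (resolventTwo hw₂ hsym hz h : L2two d) =ᵐ[volume]
      fun x => ((w₂ K x.1 x.2 : ℂ) - z)⁻¹ * (h : L2two d) x :=
  coeFn_mulSym _ _ h

lemma continuous_schurKernel (hv₁ : Continuous v₁)
    (hw₂ : Continuous fun x : Td d × Td d => w₂ K x.1 x.2) (hz : z ∉ bigBand w₂ K) :
    Continuous fun x : Td d × Td d =>
      (v₁ x.1 : ℂ) * v₁ x.2 / 2 * ((w₂ K x.1 x.2 : ℂ) - z)⁻¹ :=
  Continuous.mul (by fun_prop) (continuous_inv_ofReal_sub hw₂ hz)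

/-- The compact part of the Schur complement: the integral operator with kernel
`v₁(p) v₁(t) / (2 (w₂(K; p, t) - z))`. -/
def schurIntegral (hv₁ : Continuous v₁) (hw₂ : Continuous fun x : Td d × Td d => w₂ K x.1 x.2)
    (hz : z ∉ bigBand w₂ K) : L2 d →L[ℂ] L2 d :=
  BoundedContinuousFunction.toLp 2 volume ℂ ∘L kernelOperator 2 2 volume
    ⟨_, continuous_schurKernel hv₁ hw₂ hz⟩

lemma isCompactOperator_schurIntegral (hv₁ : Continuous v₁)
    (hw₂ : Continuous fun x : Td d × Td d => w₂ K x.1 x.2) (hz : z ∉ bigBand w₂ K) :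
    IsCompactOperator (schurIntegral hv₁ hw₂ hz) :=
  IsCompactOperator.clm_comp (isCompactOperator_kernelOperator 2 2 volume _)
    (BoundedContinuousFunction.toLp 2 volume ℂ)

lemma coeFn_schurIntegral (hv₁ : Continuous v₁)
    (hw₂ : Continuous fun x : Td d × Td d => w₂ K x.1 x.2) (hz : z ∉ bigBand w₂ K) (g : L2 d) :
    schurIntegral hv₁ hw₂ hz g =ᵐ[volume]
      fun p => ∫ t, (v₁ p : ℂ) * v₁ t / 2 * ((w₂ K p t : ℂ) - z)⁻¹ * g t := by
  refine (BoundedContinuousFunction.coeFn_toLp 2 volume ℂ _).trans (.of_forall fun p => ?_)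
  exact kernelOperator_apply 2 2 volume _ g p

lemma factorsModCompact_projZero {F : Type*} [NormedAddCommGroup F] [NormedSpace ℂ F]
    (T : H3 d →L[ℂ] F) : FactorsModCompact T (projZero d) :=
  .of_isCompactOperator T (isCompactOperator_of_locallyCompactSpace_dom _)

lemma factorsModCompact_one_of_projOne_of_projTwo {F : Type*} [NormedAddCommGroup F]
    [NormedSpace ℂ F] {T : H3 d →L[ℂ] F}
    (hone : FactorsModCompact T (projOne d)) (htwo : FactorsModCompact T (projTwo d)) :
    FactorsModCompact T (1 : H3 d →L[ℂ] H3 d) := by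
  have hsum : (1 : H3 d →L[ℂ] H3 d) =
      inclZero d ∘L projZero d + inclOne d ∘L projOne d + inclTwo d ∘L projTwo d :=
    ContinuousLinearMap.ext fun f => (incl_proj_add f).symm
  rw [hsum]
  exact (((factorsModCompact_projZero T).clm_comp (inclZero d)).add
    (hone.clm_comp (inclOne d))).add (htwo.clm_comp (inclTwo d))

namespace IsHamiltonian

lemma resolventTwo_apply_sub (hw₂ : Continuous fun x : Td d × Td d => w₂ K x.1 x.2)
    (hsym : ∀ p q, w₂ K p q = w₂ K q p) (hz : z ∉ bigBand w₂ K)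
    (hH : IsHamiltonian w₀ v₀ v₁ w₁ w₂ K H) (h : L2sym d) :
    resolventTwo hw₂ hsym hz (projTwo d (H (inclTwo d h)) - z • h) = h := by
  refine Subtype.ext (Lp.ext ?_)
  filter_upwards [coeFn_resolventTwo hw₂ hsym hz (projTwo d (H (inclTwo d h)) - z • h),
    Lp.coeFn_sub (projTwo d (H (inclTwo d h)) : L2two d) (z • h : L2sym d),
    Lp.coeFn_smul z (h : L2two d), hH.coeFn_projTwo_apply_inclTwo h] with x hres hsub hsmul htwo
  rw [hres, Submodule.coe_sub, hsub, Pi.sub_apply, htwo, Submodule.coe_smul, hsmul, Pi.smul_apply,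
    smul_eq_mul, ← sub_mul, inv_mul_cancel_left₀ (ofReal_sub_ne_zero_of_notMem_bigBand hw₂ hz _ _)]

lemma coeFn_projOne_apply_inclTwo_resolventTwo (hv₁ : Continuous v₁)
    (hw₂ : Continuous fun x : Td d × Td d => w₂ K x.1 x.2)
    (hsym : ∀ p q, w₂ K p q = w₂ K q p) (hz : z ∉ bigBand w₂ K)
    (hH : IsHamiltonian w₀ v₀ v₁ w₁ w₂ K H) (g : L2 d) :
    projOne d (H (inclTwo d (resolventTwo hw₂ hsym hz (projTwo d (H (inclOne d g)))))) =ᵐ[volume]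
      fun p => (∫ t, (v₁ p : ℂ) * v₁ t / 2 * ((w₂ K p t : ℂ) - z)⁻¹ * g t) +
        (∫ t, (v₁ t : ℂ) ^ 2 / ((w₂ K p t : ℂ) - z)) * (g p / 2) := by
  set h := resolventTwo hw₂ hsym hz (projTwo d (H (inclOne d g)))
  have hfun : ∀ᵐ x : Td d × Td d, (h : L2two d) x =
      ((w₂ K x.1 x.2 : ℂ) - z)⁻¹ * (((v₁ x.1 : ℂ) * g x.2 + v₁ x.2 * g x.1) / 2) := by
    filter_upwards [coeFn_resolventTwo hw₂ hsym hz (projTwo d (H (inclOne d g))),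
      hH.coeFn_projTwo_apply_inclOne g] with x hres htwo
    rw [hres, htwo]
  filter_upwards [hH.coeFn_projOne_apply_inclTwo h, Measure.ae_ae_of_ae_prod hfun] with p hp hfun
  have hker : Integrable fun t => (v₁ p : ℂ) * v₁ t / 2 * ((w₂ K p t : ℂ) - z)⁻¹ * g t := by
    have hcont := (continuous_schurKernel hv₁ hw₂ hz).comp (Continuous.prodMk_right p)
    obtain ⟨c, hc⟩ := (isCompact_range hcont).isBounded.exists_norm_le
    exact ((Lp.memLp g).integrable one_le_two).bdd_mul (c := c) hcont.aestronglyMeasurable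
      (.of_forall fun t => hc _ ⟨t, rfl⟩)
  have hdiag : Integrable fun t => (v₁ t : ℂ) ^ 2 / ((w₂ K p t : ℂ) - z) := by
    have hcont : Continuous fun t => (v₁ t : ℂ) ^ 2 / ((w₂ K p t : ℂ) - z) :=
      Continuous.div (by fun_prop) (by fun_prop) (ofReal_sub_ne_zero_of_notMem_bigBand hw₂ hz p)
    exact hcont.integrable_of_hasCompactSupport (.of_compactSpace _)
  rw [hp, ← integral_mul_const, ← integral_add hker (hdiag.mul_const _)]
  refine integral_congr_ae ?_
  filter_upwards [hfun] with t ht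
  rw [ht]
  ring

lemma schurComplement_eq (hv₁ : Continuous v₁) (hw₁ : Continuous (w₁ K))
    (hw₂ : Continuous fun x : Td d × Td d => w₂ K x.1 x.2)
    (hsym : ∀ p q, w₂ K p q = w₂ K q p) (hz : z ∉ bigBand w₂ K)
    (hH : IsHamiltonian w₀ v₀ v₁ w₁ w₂ K H) (g : L2 d) :
    projOne d (H (inclOne d g)) - z • g -
        projOne d (H (inclTwo d (resolventTwo hw₂ hsym hz (projTwo d (H (inclOne d g)))))) =
      mulLp 2 volume ⟨_, continuous_Delta hv₁ hw₁ hw₂ hz⟩ g - schurIntegral hv₁ hw₂ hz g := by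
  refine Lp.ext ?_
  filter_upwards [Lp.coeFn_sub (projOne d (H (inclOne d g)) - z • g)
      (projOne d (H (inclTwo d (resolventTwo hw₂ hsym hz (projTwo d (H (inclOne d g))))))),
    Lp.coeFn_sub (projOne d (H (inclOne d g))) (z • g), Lp.coeFn_smul z g,
    Lp.coeFn_sub (mulLp 2 volume ⟨_, continuous_Delta hv₁ hw₁ hw₂ hz⟩ g)
      (schurIntegral hv₁ hw₂ hz g),
    hH.coeFn_projOne_apply_inclOne g,
    hH.coeFn_projOne_apply_inclTwo_resolventTwo hv₁ hw₂ hsym hz g,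
    coeFn_mulLp ⟨_, continuous_Delta hv₁ hw₁ hw₂ hz⟩ g,
    coeFn_schurIntegral hv₁ hw₂ hz g] with p hsub hshift hsmul hdiff hone htwo hmul hint
  rw [hsub, Pi.sub_apply, hshift, Pi.sub_apply, hsmul, Pi.smul_apply, hone, htwo, hdiff,
    Pi.sub_apply, hmul, hint, ContinuousMap.coe_mk, Delta, smul_eq_mul]
  ring

lemma resolventTwo_projTwo_comp_sub (hw₂ : Continuous fun x : Td d × Td d => w₂ K x.1 x.2)
    (hsym : ∀ p q, w₂ K p q = w₂ K q p) (hz : z ∉ bigBand w₂ K)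
    (hH : IsHamiltonian w₀ v₀ v₁ w₁ w₂ K H) :
    (resolventTwo hw₂ hsym hz ∘L projTwo d) ∘L (H - z • 1) =
      (resolventTwo hw₂ hsym hz ∘L projTwo d ∘L H ∘L inclOne d) ∘L projOne d + projTwo d := by
  ext1 f
  change resolventTwo hw₂ hsym hz (projTwo d (H f - z • f)) =
    resolventTwo hw₂ hsym hz (projTwo d (H (inclOne d (projOne d f)))) + projTwo d f
  rw [map_sub, map_smul, apply_eq_sum_incl H f, map_add, map_add, hH.projTwo_apply_inclZero,
    zero_add, add_sub_assoc, map_add, hH.resolventTwo_apply_sub]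

lemma mulLp_Delta_comp_projOne (hv₁ : Continuous v₁) (hw₁ : Continuous (w₁ K))
    (hw₂ : Continuous fun x : Td d × Td d => w₂ K x.1 x.2)
    (hsym : ∀ p q, w₂ K p q = w₂ K q p) (hz : z ∉ bigBand w₂ K)
    (hH : IsHamiltonian w₀ v₀ v₁ w₁ w₂ K H) :
    mulLp 2 volume ⟨_, continuous_Delta hv₁ hw₁ hw₂ hz⟩ ∘L projOne d =
      (projOne d - (projOne d ∘L H ∘L inclTwo d) ∘L resolventTwo hw₂ hsym hz ∘L projTwo d) ∘L
          (H - z • 1) -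
        ((projOne d ∘L H ∘L inclZero d) ∘L projZero d - schurIntegral hv₁ hw₂ hz ∘L projOne d) := by
  rw [ContinuousLinearMap.sub_comp, ContinuousLinearMap.comp_assoc,
    hH.resolventTwo_projTwo_comp_sub]
  ext1 f
  change mulLp 2 volume _ (projOne d f) = projOne d (H f - z • f) -
      projOne d (H (inclTwo d (resolventTwo hw₂ hsym hz
        (projTwo d (H (inclOne d (projOne d f)))) + projTwo d f))) -
    (projOne d (H (inclZero d (projZero d f))) - schurIntegral hv₁ hw₂ hz (projOne d f))
  rw [sub_eq_iff_eq_add.1 (hH.schurComplement_eq hv₁ hw₁ hw₂ hsym hz (projOne d f)).symm,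
    apply_eq_sum_incl H f]
  simp only [map_add, map_sub, map_smul]
  abel

lemma factorsModCompact_projOne (hv₁ : Continuous v₁) (hw₁ : Continuous (w₁ K))
    (hw₂ : Continuous fun x : Td d × Td d => w₂ K x.1 x.2)
    (hsym : ∀ p q, w₂ K p q = w₂ K q p) (hz : z ∉ SigK v₁ w₁ w₂ K)
    (hH : IsHamiltonian w₀ v₀ v₁ w₁ w₂ K H) :
    FactorsModCompact (H - z • 1) (projOne d) := by
  have hband : z ∉ bigBand w₂ K := fun h => hz (.inl h)
  let Δ : C(Td d, ℂ) := ⟨_, continuous_Delta hv₁ hw₁ hw₂ hband⟩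
  have hΔ := Delta_ne_zero_of_notMem_SigK hw₂ hz
  let Δinv : C(Td d, ℂ) := ⟨_, Δ.continuous.inv₀ hΔ⟩
  have hinv : mulLp 2 volume Δinv ∘L mulLp 2 volume Δ = 1 :=
    mulLp_comp_mulLp_of_mul_eq_one <| ContinuousMap.ext fun k => inv_mul_cancel₀ (hΔ k)
  have hG : IsCompactOperator (schurIntegral hv₁ hw₂ hband ∘L projOne d) :=
    (isCompactOperator_schurIntegral hv₁ hw₂ hband).comp_clm _
  have hmul : FactorsModCompact (H - z • 1) (mulLp 2 volume Δ ∘L projOne d) := by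
    rw [hH.mulLp_Delta_comp_projOne hv₁ hw₁ hw₂ hsym hband]
    exact (FactorsModCompact.comp_self _ _).sub
      (((factorsModCompact_projZero _).clm_comp _).sub (.of_isCompactOperator _ hG))
  have hcomp : mulLp 2 volume Δinv ∘L mulLp 2 volume Δ ∘L projOne d = projOne d := by
    rw [← ContinuousLinearMap.comp_assoc, hinv]
    exact ContinuousLinearMap.id_comp _
  rw [← hcomp]
  exact hmul.clm_comp (mulLp 2 volume Δinv)

lemma factorsModCompact_projTwo (hv₁ : Continuous v₁) (hw₁ : Continuous (w₁ K))
    (hw₂ : Continuous fun x : Td d × Td d => w₂ K x.1 x.2)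
    (hsym : ∀ p q, w₂ K p q = w₂ K q p) (hz : z ∉ SigK v₁ w₁ w₂ K)
    (hH : IsHamiltonian w₀ v₀ v₁ w₁ w₂ K H) :
    FactorsModCompact (H - z • 1) (projTwo d) := by
  have hband : z ∉ bigBand w₂ K := fun h => hz (.inl h)
  rw [← sub_eq_iff_eq_add'.2 (hH.resolventTwo_projTwo_comp_sub hw₂ hsym hband)]
  exact (FactorsModCompact.comp_self _ _).sub
    ((hH.factorsModCompact_projOne hv₁ hw₁ hw₂ hsym hz).clm_comp _)

end IsHamiltonian

end SchurComplement

theorem spectrum_outside_SigK_discrete_general {d : ℕ} {w₀ v₀ v₁ : Td d → ℝ}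
    {w₁ : Td d → Td d → ℝ} {w₂ : Td d → Td d → Td d → ℝ} {K : Td d} {H : H3 d →L[ℂ] H3 d}
    (hv₁ : Continuous v₁) (hw₁ : Continuous (w₁ K))
    (hw₂ : Continuous fun x : Td d × Td d => w₂ K x.1 x.2)
    (hsym : ∀ p q, w₂ K p q = w₂ K q p) (hH : IsHamiltonian w₀ v₀ v₁ w₁ w₂ K H) :
    spectrum ℂ H \ SigK v₁ w₁ w₂ K ⊆ discSpec H ∧ essSpec H ⊆ SigK v₁ w₁ w₂ K := by
  have hess : essSpec H ⊆ SigK v₁ w₁ w₂ K := fun z hz => by_contra fun hzS =>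
    notMem_essSpec_of_factorsModCompact_one (factorsModCompact_one_of_projOne_of_projTwo
      (hH.factorsModCompact_projOne hv₁ hw₁ hw₂ hsym hzS)
      (hH.factorsModCompact_projTwo hv₁ hw₁ hw₂ hsym hzS)) hz
  exact ⟨(sdiff_subset_sdiff_right hess).trans
    (spectrum_diff_essSpec_subset_discSpec (hH.isSelfAdjoint hv₁)), hess⟩

/-- For every `K ∈ T^d`, `σ(H(K)) \ Σ_K` consists only of isolated
eigenvalues of finite multiplicity, i.e. `σ(H(K)) \ Σ_K ⊆ σ_disc(H(K))`; in particular
`σ_ess(H(K)) ⊆ Σ_K`. -/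
theorem spectrum_outside_SigK_discrete
    (d : ℕ) (hd : 1 ≤ d)
    (w₀ v₀ v₁ : Td d → ℝ) (w₁ : Td d → Td d → ℝ) (w₂ : Td d → Td d → Td d → ℝ)
    (hw₀ : Continuous w₀) (hv₀ : Continuous v₀) (hv₁ : Continuous v₁)
    (hw₁ : Continuous fun x : Td d × Td d => w₁ x.1 x.2)
    (hw₂ : Continuous fun x : Td d × Td d × Td d => w₂ x.1 x.2.1 x.2.2)
    (hsym : ∀ K p q : Td d, w₂ K p q = w₂ K q p)
    (K : Td d) (H : H3 d →L[ℂ] H3 d)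
    (hH : IsHamiltonian w₀ v₀ v₁ w₁ w₂ K H) :
    spectrum ℂ H \ SigK v₁ w₁ w₂ K ⊆ discSpec H ∧
    essSpec H ⊆ SigK v₁ w₁ w₂ K := by
  exact spectrum_outside_SigK_discrete_general hv₁ (hw₁.comp (.prodMk_right K))
    (hw₂.comp (.prodMk_right K)) (hsym K) hH
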